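/- Let g ≥ 1 and let Sp(2g, ℂ) = {A ∈ M_{2g}(ℂ) : Aᵀ J A = J} with J = fromBlocks 0 1 (-1) 0. Let c = (c_{ij}) ∈ M_{2g}(ℂ) and d ∈ ℂ. If Σ_{i,j} c_{ij} A_{ij} = d for every A ∈ Sp(2g, ℂ), then c = 0 and d = 0. Equivalently, the 4g² matrix-entry functions A ↦ A_{ij} together with the constant function 1 are ℂ-linearly independent as functions on Sp(2g, ℂ). -/

import Mathlib

open Matrix

/-!
The linear span of the symplectic group is a subalgebra `S` of the matrix algebra, and it contains
`J`. For symmetric `X` the shear `[1 X; 0 1]` is symplectic; subtracting the identity and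
multiplying by `J` puts `[X 0; 0 0]` in `S`. Since symmetric matrices generate the full matrix
algebra, `S` contains every `[A 0; 0 0]`, and multiplying by `J` on either side moves `A`, up to
sign, to each of the other three blocks. Hence `S` is everything, and a linear functional vanishing
on the symplectic group is zero.

A constant value `d` of a linear functional on the symplectic group is zero in any characteristic:
a symplectic `T` with `1 + T ^ 2 = T` gives `d + d = d`.
-/

section SymmetricMatrices

variable {n R : Type*} [Fintype n] [DecidableEq n] [CommSemiring R]

lemma single_mem_adjoin_isSymm (i j : n) (r : R) :
    single i j r ∈ Algebra.adjoin R {X : Matrix n n R | X.IsSymm} := by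
  have diagonal_mem : single i i r ∈ Algebra.adjoin R {X : Matrix n n R | X.IsSymm} :=
    Algebra.subset_adjoin (transpose_single i i r)
  obtain rfl | hij := eq_or_ne i j
  · exact diagonal_mem
  · have symm_mem : single i j 1 + single j i 1 ∈
        Algebra.adjoin R {X : Matrix n n R | X.IsSymm} :=
      Algebra.subset_adjoin (by simp [IsSymm, add_comm])
    simpa [mul_add, hij] using mul_mem diagonal_mem symm_mem

lemma adjoin_isSymm_eq_top : Algebra.adjoin R {X : Matrix n n R | X.IsSymm} = ⊤ := by
  refine Algebra.eq_top_iff.mpr fun A => ?_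
  induction A using Matrix.induction_on' with
  | h_zero => exact zero_mem _
  | h_add A B hA hB => exact add_mem hA hB
  | h_std_basis i j r => exact single_mem_adjoin_isSymm i j r

end SymmetricMatrices

section SymplecticSpan

variable {l R : Type*} [Fintype l] [DecidableEq l] [CommRing R]

lemma mem_symplecticGroup_iff_transpose_mul_fromBlocks_mul {A : Matrix (l ⊕ l) (l ⊕ l) R} :
    A ∈ symplecticGroup l R ↔
      Aᵀ * fromBlocks 0 1 (-1) 0 * A = fromBlocks 0 1 (-1) 0 := by
  have fromBlocks_eq_neg_J : fromBlocks 0 1 (-1) 0 = -J l R := by simp [J, fromBlocks_neg]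
  rw [fromBlocks_eq_neg_J, mul_neg, neg_mul, neg_inj, SymplecticGroup.mem_iff']

lemma shear_mem_symplecticGroup {X : Matrix l l R} (hX : X.IsSymm) :
    fromBlocks 1 X 0 1 ∈ symplecticGroup l R := by
  simp [SymplecticGroup.fromBlocks_mem_iff, hX.eq]

lemma exists_mem_symplecticGroup_one_add_sq_eq_self :
    ∃ T ∈ symplecticGroup l R, 1 + T ^ 2 = T := by
  refine ⟨fromBlocks 0 (-1) 1 1, by simp [SymplecticGroup.fromBlocks_mem_iff], ?_⟩
  rw [sq, fromBlocks_multiply, ← fromBlocks_one, fromBlocks_add]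
  simp

lemma J_mem_adjoin_symplecticGroup :
    J l R ∈ Algebra.adjoin R (symplecticGroup l R : Set (Matrix (l ⊕ l) (l ⊕ l) R)) :=
  Algebra.subset_adjoin (SymplecticGroup.J_mem l R)

lemma fromBlocks₁₁_mem_adjoin_symplecticGroup_of_isSymm {X : Matrix l l R} (hX : X.IsSymm) :
    fromBlocks X 0 0 0 ∈
      Algebra.adjoin R (symplecticGroup l R : Set (Matrix (l ⊕ l) (l ⊕ l) R)) := by
  have shear_sub_one_mul_J : (fromBlocks 1 X 0 1 - 1) * J l R = fromBlocks X 0 0 0 := by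
    simp [J, ← fromBlocks_one, sub_eq_add_neg, fromBlocks_neg, fromBlocks_add, fromBlocks_multiply]
  rw [← shear_sub_one_mul_J]
  exact mul_mem (sub_mem (Algebra.subset_adjoin (shear_mem_symplecticGroup hX)) (one_mem _))
    J_mem_adjoin_symplecticGroup

lemma fromBlocks₁₁_mem_adjoin_symplecticGroup (A : Matrix l l R) :
    fromBlocks A 0 0 0 ∈
      Algebra.adjoin R (symplecticGroup l R : Set (Matrix (l ⊕ l) (l ⊕ l) R)) := by
  have hA : A ∈ Algebra.adjoin R {X : Matrix l l R | X.IsSymm} := by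
    rw [adjoin_isSymm_eq_top]
    exact Algebra.mem_top
  induction hA using Algebra.adjoin_induction with
  | mem X hX => exact fromBlocks₁₁_mem_adjoin_symplecticGroup_of_isSymm hX
  | algebraMap r =>
    exact fromBlocks₁₁_mem_adjoin_symplecticGroup_of_isSymm (isSymm_diagonal fun _ => r)
  | add A B _ _ hA hB => simpa [fromBlocks_add] using add_mem hA hB
  | mul A B _ _ hA hB => simpa [fromBlocks_multiply] using mul_mem hA hB

lemma adjoin_symplecticGroup_eq_top :
    Algebra.adjoin R (symplecticGroup l R : Set (Matrix (l ⊕ l) (l ⊕ l) R)) = ⊤ := by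
  refine Algebra.eq_top_iff.mpr fun M => ?_
  have block_decomposition (A B C D : Matrix l l R) :
      fromBlocks A B C D = fromBlocks A 0 0 0 - fromBlocks B 0 0 0 * J l R
        + J l R * fromBlocks C 0 0 0 - J l R * fromBlocks D 0 0 0 * J l R := by
    simp [J, sub_eq_add_neg, fromBlocks_neg, fromBlocks_add, fromBlocks_multiply]
  have hJ := J_mem_adjoin_symplecticGroup (l := l) (R := R)
  have corner_mem := fromBlocks₁₁_mem_adjoin_symplecticGroup (l := l) (R := R)
  rw [← fromBlocks_toBlocks M, block_decomposition]
  exact sub_mem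
    (add_mem (sub_mem (corner_mem _) (mul_mem (corner_mem _) hJ)) (mul_mem hJ (corner_mem _)))
    (mul_mem (mul_mem hJ (corner_mem _)) hJ)

lemma span_symplecticGroup_eq_top :
    Submodule.span R (symplecticGroup l R : Set (Matrix (l ⊕ l) (l ⊕ l) R)) = ⊤ := by
  rw [← Submonoid.closure_eq (symplecticGroup l R), ← Algebra.adjoin_eq_span,
    adjoin_symplecticGroup_eq_top, Algebra.top_toSubmodule]

lemma eq_zero_of_linearMap_eq_on_symplecticGroup {M : Type*} [AddCommGroup M] [Module R M]
    {f : Matrix (l ⊕ l) (l ⊕ l) R →ₗ[R] M} {m : M} (hf : ∀ A ∈ symplecticGroup l R, f A = m) :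
    m = 0 := by
  obtain ⟨T, hT, hT_sq⟩ := exists_mem_symplecticGroup_one_add_sq_eq_self (l := l) (R := R)
  have add_self : m + m = m := calc
    m + m = f 1 + f (T ^ 2) := by rw [hf 1 (one_mem _), hf _ (pow_mem hT 2)]
    _ = f T := by rw [← map_add, hT_sq]
    _ = m := hf T hT
  exact add_eq_left.mp add_self

theorem no_linear_relation_on_symplectic_entries_general
    (c : Matrix (l ⊕ l) (l ⊕ l) R) (d : R)
    (h : ∀ A ∈ symplecticGroup l R, ∑ i, ∑ j, c i j * A i j = d) :
    c = 0 ∧ d = 0 := by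
  let f : Matrix (l ⊕ l) (l ⊕ l) R →ₗ[R] R := ∑ i, ∑ j, c i j • entryLinearMap R R i j
  have f_apply (A) : f A = ∑ i, ∑ j, c i j * A i j := by simp [f]
  have f_eq_d : ∀ A ∈ symplecticGroup l R, f A = d := fun A hA => (f_apply A).trans (h A hA)
  have hd : d = 0 := eq_zero_of_linearMap_eq_on_symplecticGroup f_eq_d
  have hf : f = 0 :=
    LinearMap.ext_on span_symplecticGroup_eq_top fun A hA => (f_eq_d A hA).trans hd
  have f_single (i j) : f (single i j 1) = c i j := by
    simp [f_apply, single_apply, ite_and]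
  exact ⟨Matrix.ext fun i j => by rw [← f_single, hf, LinearMap.zero_apply, Matrix.zero_apply], hd⟩

end SymplecticSpan

/-- No ℂ-linear relations between the matrix entries of a generic element of
`Sp(2g, ℂ)`: if `Σ c_{ij} A_{ij} = d` for all symplectic `A`, then `c = 0` and `d = 0`. -/
theorem no_linear_relation_on_symplectic_entries
    (g : ℕ) (hg : 1 ≤ g)
    (c : Matrix (Fin g ⊕ Fin g) (Fin g ⊕ Fin g) ℂ) (d : ℂ)
    (h : ∀ A : Matrix (Fin g ⊕ Fin g) (Fin g ⊕ Fin g) ℂ,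
      Aᵀ * (fromBlocks 0 1 (-1) 0) * A = (fromBlocks 0 1 (-1) 0) →
        ∑ i, ∑ j, c i j * A i j = d) :
    c = 0 ∧ d = 0 :=
  no_linear_relation_on_symplectic_entries_general c d fun A hA =>
    h A (mem_symplecticGroup_iff_transpose_mul_fromBlocks_mul.mp hA)
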